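/- Suppose f ∈ 𝓑₊. Then its least concave majorant f̄ belongs to 𝓑₊ and satisfies A_{0,1}(f̄) = A_{0,1}(f) and Γ_{0,1}(f̄) ≤ Γ_{0,1}(f). -/

import Mathlib

/-!
Write `f̄` for the least concave majorant of `f`.

*Area.* A function lying above its chord over `[0, x]` has that chord as greatest convex minorant.
Since `f̄` is its own least concave majorant and has the same endpoint values as `f`, the two area
integrands agree.

*Continuity.* At an endpoint `c` the affine functions `f c + ε + C * dist · c`, with `C` large,
dominate `f` and hence `f̄`; in the interior a concave function is continuous.

*Energy.* On each component `(a, b)` of the open set `{f < f̄}` the majorant is the chord of `f`,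
so by Jensen's inequality its energy there is at most that of `f`. At a contact point where both
functions are differentiable, `f̄ - f` has a local minimum and the derivatives agree; this covers
almost every contact point. The resulting inequality `∫ f̄'² ≤ ∫ f'²` holds in `[0, ∞]`.

*Absolute continuity.* The energy inequality makes `f̄'` integrable, and a continuous concave
function with integrable derivative is the integral of that derivative.
-/

open MeasureTheory Filter Set
open scoped ENNReal

noncomputable section

namespace DidoLIL

/-- `f ∈ 𝓐^x`: `f : [0,x] → ℝ` is absolutely continuous with `f 0 = 0` and
`∫₀ˣ f′(u)² du < ∞`.  Absolute continuity is encoded by the fundamental theorem of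
calculus: `f` is the integral of its (a.e.) derivative, which is integrable, and the
square of the derivative is integrable (`Γ_{0,x}(f) < ∞`). -/
def MemA (x : ℝ) (f : ℝ → ℝ) : Prop :=
  f 0 = 0 ∧
  MeasureTheory.IntegrableOn (deriv f) (Set.Icc 0 x) ∧
  (∀ t ∈ Set.Icc (0:ℝ) x, f t = ∫ s in (0:ℝ)..t, deriv f s) ∧
  MeasureTheory.IntegrableOn (fun u => (deriv f u) ^ 2) (Set.Icc 0 x)

/-- The least concave majorant of `f` on `[0,x]`: the pointwise infimum of all functions
concave on `[0,x]` that dominate `f` there. -/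
def concMaj (x : ℝ) (f : ℝ → ℝ) (u : ℝ) : ℝ :=
  sInf {y : ℝ | ∃ g : ℝ → ℝ, ConcaveOn ℝ (Set.Icc 0 x) g ∧
    (∀ t ∈ Set.Icc (0:ℝ) x, f t ≤ g t) ∧ y = g u}

/-- The greatest convex minorant of `f` on `[0,x]`: the pointwise supremum of all functions
convex on `[0,x]` that are dominated by `f` there. -/
def convMin (x : ℝ) (f : ℝ → ℝ) (u : ℝ) : ℝ :=
  sSup {y : ℝ | ∃ g : ℝ → ℝ, ConvexOn ℝ (Set.Icc 0 x) g ∧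
    (∀ t ∈ Set.Icc (0:ℝ) x, g t ≤ f t) ∧ y = g u}

/-- `A_{0,x}(f) = ∫₀ˣ (f̄(u) − f̲(u)) du`. -/
def AreaF (x : ℝ) (f : ℝ → ℝ) : ℝ :=
  ∫ u in Set.Icc (0:ℝ) x, (concMaj x f u - convMin x f u)

/-- `Γ_{0,x}(f) = ∫₀ˣ f′(u)² du`. -/
def GammaF (x : ℝ) (f : ℝ → ℝ) : ℝ :=
  ∫ u in Set.Icc (0:ℝ) x, (deriv f u) ^ 2

end DidoLIL

namespace DidoLIL

section ConcaveFunctions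

variable {F : ℝ → ℝ} {s : Set ℝ} {a b : ℝ}

lemma ae_differentiableAt_of_concaveOn (hF : ConcaveOn ℝ s F) :
    ∀ᵐ t, t ∈ interior s → DifferentiableAt ℝ F t := by
  have hbv : LocallyBoundedVariationOn F (interior s) := by
    intro a b ha hb
    rw [inter_eq_right.2 (hF.1.interior.ordConnected.out ha hb)]
    obtain ⟨K, hK⟩ := (hF.locallyLipschitzOn_interior.mono
      (hF.1.interior.ordConnected.out ha hb)).exists_lipschitzOnWith_of_compact isCompact_Icc
    rcases le_or_gt a b with hab | hab
    · simpa using hK.locallyBoundedVariationOn a b (left_mem_Icc.2 hab) (right_mem_Icc.2 hab)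
    · simp [BoundedVariationOn, Icc_eq_empty_of_lt hab]
  filter_upwards [hbv.ae_differentiableWithinAt_of_mem] with t ht hts
  exact (ht hts).differentiableAt (isOpen_interior.mem_nhds hts)

/-- Only right derivatives are available at every interior point, so the fundamental theorem is
applied to them; they agree with `deriv F` almost everywhere. -/
lemma integral_deriv_eq_sub_of_concaveOn (hab : a ≤ b) (hF : ConcaveOn ℝ (Icc a b) F)
    (hFc : ContinuousOn F (Icc a b)) (hint : IntervalIntegrable (deriv F) volume a b) :
    ∫ t in a..b, deriv F t = F b - F a := by
  have hright : ∀ t ∈ Ioo a b, HasDerivWithinAt F (derivWithin F (Ioi t) t) (Ioi t) t := by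
    intro t ht
    rw [← interior_Icc] at ht
    have h := (hF.neg.differentiableWithinAt_Ioi_of_mem_interior ht).neg
    rw [neg_neg] at h
    exact h.hasDerivWithinAt
  have hae : ∀ᵐ t, t ∈ uIoc a b → deriv F t = derivWithin F (Ioi t) t := by
    filter_upwards [ae_differentiableAt_of_concaveOn hF, Measure.ae_ne volume b]
      with t hdiff htb ht
    rw [uIoc_of_le hab] at ht
    rw [interior_Icc] at hdiff
    exact ((hdiff ⟨ht.1, lt_of_le_of_ne ht.2 htb⟩).derivWithin (uniqueDiffWithinAt_Ioi t)).symm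
  rw [intervalIntegral.integral_congr_ae hae]
  exact intervalIntegral.integral_eq_sub_of_hasDeriv_right_of_le hab hFc hright
    (hint.congr_ae ((ae_restrict_iff' measurableSet_uIoc).2 hae))

lemma deriv_eq_of_eventuallyLE_of_eq {f F : ℝ → ℝ} {t : ℝ} (hle : f ≤ᶠ[nhds t] F)
    (heq : f t = F t) (hf : DifferentiableAt ℝ f t) (hF : DifferentiableAt ℝ F t) :
    deriv F t = deriv f t := by
  have hmin : IsLocalMin (F - f) t := by
    filter_upwards [hle] with u hu
    simpa [heq] using hu
  have h := hmin.deriv_eq_zero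
  rwa [deriv_sub hF hf, sub_eq_zero] at h

lemma concaveOn_dist_left : ConcaveOn ℝ (Icc a b) fun t => dist t a := by
  refine ((concaveOn_id (convex_Icc a b)).add_const (-a)).congr fun t ht => ?_
  simp [Real.dist_eq, ← sub_eq_add_neg, abs_of_nonneg (sub_nonneg.2 ht.1)]

lemma concaveOn_dist_right : ConcaveOn ℝ (Icc a b) fun t => dist t b := by
  refine ((convexOn_id (convex_Icc a b)).neg.add_const b).congr fun t ht => ?_
  rw [Real.dist_eq, abs_of_nonpos (sub_nonpos.2 ht.2), neg_sub, sub_eq_neg_add]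
  rfl

end ConcaveFunctions

lemma exists_le_add_mul_dist {X : Type*} [PseudoMetricSpace X] {K : Set X} {f : X → ℝ}
    (hK : IsCompact K) (hf : ContinuousOn f K) {c : X} (hc : c ∈ K) {ε : ℝ} (hε : 0 < ε) :
    ∃ C, 0 ≤ C ∧ ∀ t ∈ K, f t ≤ f c + ε + C * dist t c := by
  obtain ⟨M, hM⟩ := hK.bddAbove_image hf
  obtain ⟨δ, hδ, hnear⟩ := Metric.continuousOn_iff.1 hf c hc ε hε
  have hMc : 0 ≤ M - f c := sub_nonneg.2 (hM ⟨c, hc, rfl⟩)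
  refine ⟨(M - f c) / δ, by positivity, fun t ht => ?_⟩
  rcases lt_or_ge (dist t c) δ with htc | htc
  · have hclose := (abs_lt.1 (hnear t ht htc)).2
    have : 0 ≤ (M - f c) / δ * dist t c := by positivity
    linarith
  · have hfar : M - f c ≤ (M - f c) / δ * dist t c := by
      rw [div_mul_eq_mul_div, le_div_iff₀ hδ]
      gcongr
    have := hM ⟨t, ht, rfl⟩
    linarith

section Components

lemma exists_connectedComponentIn_eq_Ioo {α : Type*} [ConditionallyCompleteLinearOrder α]
    [TopologicalSpace α] [OrderTopology α] [DenselyOrdered α] {U : Set α} {l r t : α}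
    (hU : IsOpen U) (hsub : U ⊆ Ioo l r) (ht : t ∈ U) :
    ∃ a ∈ Icc l r \ U, ∃ b ∈ Icc l r \ U, a < b ∧ connectedComponentIn U t = Ioo a b := by
  have hlt := (hsub ht).1.le
  have htr := (hsub ht).2.le
  have hl : l ∈ Icc l t \ U := ⟨⟨le_rfl, hlt⟩, fun h => (hsub h).1.false⟩
  have hr : r ∈ Icc t r \ U := ⟨⟨htr, le_rfl⟩, fun h => (hsub h).2.false⟩
  have hbdda : BddAbove (Icc l t \ U) := bddAbove_Icc.mono sdiff_subset
  have hbddb : BddBelow (Icc t r \ U) := bddBelow_Icc.mono sdiff_subset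
  set a := sSup (Icc l t \ U)
  set b := sInf (Icc t r \ U)
  have ha : a ∈ Icc l t \ U := (isClosed_Icc.sdiff hU).csSup_mem ⟨l, hl⟩ hbdda
  have hb : b ∈ Icc t r \ U := (isClosed_Icc.sdiff hU).csInf_mem ⟨r, hr⟩ hbddb
  have hat : a < t := lt_of_le_of_ne ha.1.2 fun h => ha.2 (h ▸ ht)
  have htb : t < b := lt_of_le_of_ne hb.1.1 fun h => hb.2 (h ▸ ht)
  have hIoo : Ioo a b ⊆ U := by
    intro y hy
    by_contra hyU
    rcases le_total y t with hyt | hyt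
    · exact (le_csSup hbdda ⟨⟨ha.1.1.trans hy.1.le, hyt⟩, hyU⟩).not_gt hy.1
    · exact (csInf_le hbddb ⟨⟨hyt, hy.2.le.trans hb.1.2⟩, hyU⟩).not_gt hy.2
  have hord : OrdConnected (connectedComponentIn U t) :=
    isPreconnected_connectedComponentIn.ordConnected
  have htC := mem_connectedComponentIn ht
  have hCU := connectedComponentIn_subset U t
  refine ⟨a, ⟨⟨ha.1.1, ha.1.2.trans htr⟩, ha.2⟩, b, ⟨⟨hlt.trans hb.1.1, hb.1.2⟩, hb.2⟩,
    hat.trans htb, Subset.antisymm (fun y hy => ⟨?_, ?_⟩)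
      (isPreconnected_Ioo.subset_connectedComponentIn ⟨hat, htb⟩ hIoo)⟩
  · exact not_le.1 fun h => ha.2 (hCU (hord.out hy htC ⟨h, hat.le⟩))
  · exact not_le.1 fun h => hb.2 (hCU (hord.out htC hy ⟨htb.le, h⟩))

lemma setLIntegral_le_of_connectedComponentIn {X : Type*} [TopologicalSpace X]
    [LocallyConnectedSpace X] [TopologicalSpace.SeparableSpace X] [MeasurableSpace X]
    [OpensMeasurableSpace X] {μ : Measure X} {U : Set X} (hU : IsOpen U) {p q : X → ℝ≥0∞}
    (h : ∀ t ∈ U,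
      ∫⁻ u in connectedComponentIn U t, p u ∂μ ≤ ∫⁻ u in connectedComponentIn U t, q u ∂μ) :
    ∫⁻ u in U, p u ∂μ ≤ ∫⁻ u in U, q u ∂μ := by
  set S : Set (Set X) := connectedComponentIn U '' U with hS
  have hopen : ∀ C ∈ S, IsOpen (id C) := by
    rintro _ ⟨t, -, rfl⟩
    exact hU.connectedComponentIn
  have hdisj : S.PairwiseDisjoint id := by
    rintro _ ⟨t, -, rfl⟩ _ ⟨u, -, rfl⟩ hne
    refine disjoint_left.2 fun z hzt hzu => hne ?_
    exact (connectedComponentIn_eq hzt).trans (connectedComponentIn_eq hzu).symm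
  have hcount : S.Countable := hdisj.countable_of_isOpen hopen (by
    rintro _ ⟨t, ht, rfl⟩
    exact ⟨t, mem_connectedComponentIn ht⟩)
  have hcover : U = ⋃ C ∈ S, id C := by
    rw [hS, biUnion_image]
    exact Subset.antisymm (fun t ht => mem_biUnion ht (mem_connectedComponentIn ht))
      (iUnion₂_subset fun t _ => connectedComponentIn_subset U t)
  have hmeas : ∀ C ∈ S, MeasurableSet (id C) := fun C hC => (hopen C hC).measurableSet
  rw [hcover, lintegral_biUnion hcount hmeas hdisj, lintegral_biUnion hcount hmeas hdisj]
  refine ENNReal.tsum_le_tsum ?_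
  rintro ⟨_, t, ht, rfl⟩
  exact h t ht

end Components

section Chord

variable {f F : ℝ → ℝ} {s : Set ℝ} {a b t : ℝ}

/-- The line through `(a, f a)` and `(b, f b)`, as a function on all of `ℝ`; for `a = b` it is the
constant `f a`. -/
def chord (f : ℝ → ℝ) (a b t : ℝ) : ℝ := f a + (t - a) * slope f a b

lemma chord_left : chord f a b a = f a := by simp [chord]

lemma chord_right : chord f a b b = f b := by
  rw [chord, ← smul_eq_mul, sub_smul_slope, vsub_eq_sub, add_sub_cancel]

lemma hasDerivAt_chord : HasDerivAt (chord f a b) (slope f a b) t := by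
  unfold chord
  simpa using (((hasDerivAt_id t).sub_const a).mul_const (slope f a b)).const_add (f a)

lemma continuous_chord : Continuous (chord f a b) := by
  unfold chord
  fun_prop

lemma chord_convexCombo {p q u v : ℝ} (hpq : p + q = 1) :
    chord f a b (p • u + q • v) = p • chord f a b u + q • chord f a b v := by
  obtain rfl : q = 1 - p := by linarith
  simp only [chord, smul_eq_mul]
  ring

lemma concaveOn_chord (hs : Convex ℝ s) : ConcaveOn ℝ s (chord f a b) :=
  ⟨hs, fun _ _ _ _ _ _ _ _ hpq => (chord_convexCombo hpq).ge⟩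

lemma convexOn_chord (hs : Convex ℝ s) : ConvexOn ℝ s (chord f a b) :=
  ⟨hs, fun _ _ _ _ _ _ _ _ hpq => (chord_convexCombo hpq).le⟩

lemma chord_le_of_concaveOn (hF : ConcaveOn ℝ s F) (ha : a ∈ s) (hb : b ∈ s)
    (ht : t ∈ Icc a b) : chord F a b t ≤ F t := by
  simpa [chord_left, chord_right] using
    (hF.sub (convexOn_chord hF.1 (f := F) (a := a) (b := b))).min_le_of_mem_Icc ha hb ht

lemma le_chord_of_concaveOn_of_notMem_Icc (hF : ConcaveOn ℝ s F) (ha : a ∈ s) (hb : b ∈ s)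
    (hab : a < b) (ht : t ∈ s) (htab : t ∉ Icc a b) : F t ≤ chord F a b t := by
  have hG := hF.sub (convexOn_chord hF.1 (f := F) (a := a) (b := b))
  rcases lt_or_ge t a with hta | hat
  · simpa [chord_left, chord_right] using hG.left_le_of_le_right'' ht hb hta.le hab
  · have hbt : b < t := not_le.1 fun htb => htab ⟨hat, htb⟩
    simpa [chord_left, chord_right] using hG.right_le_of_le_left'' ha ht hab hbt.le

end Chord

section Envelopes

variable {x : ℝ} {f g : ℝ → ℝ} {u : ℝ}

lemma concMaj_le (hg : ConcaveOn ℝ (Icc 0 x) g) (hfg : ∀ t ∈ Icc 0 x, f t ≤ g t)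
    (hu : u ∈ Icc 0 x) : concMaj x f u ≤ g u := by
  refine csInf_le ⟨f u, ?_⟩ ⟨g, hg, hfg, rfl⟩
  rintro _ ⟨h, -, hfh, rfl⟩
  exact hfh u hu

lemma le_concMaj_of_forall (hf : BddAbove (f '' Icc 0 x)) {c : ℝ}
    (hc : ∀ g : ℝ → ℝ, ConcaveOn ℝ (Icc 0 x) g → (∀ t ∈ Icc 0 x, f t ≤ g t) → c ≤ g u) :
    c ≤ concMaj x f u := by
  obtain ⟨M, hM⟩ := hf
  refine le_csInf ⟨M, fun _ => M, concaveOn_const M (convex_Icc 0 x),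
    fun t ht => hM ⟨t, ht, rfl⟩, rfl⟩ ?_
  rintro _ ⟨g, hg, hfg, rfl⟩
  exact hc g hg hfg

lemma le_concMaj (hf : BddAbove (f '' Icc 0 x)) (hu : u ∈ Icc 0 x) : f u ≤ concMaj x f u :=
  le_concMaj_of_forall hf fun _ _ hfg => hfg u hu

lemma concaveOn_concMaj (hf : BddAbove (f '' Icc 0 x)) :
    ConcaveOn ℝ (Icc 0 x) (concMaj x f) := by
  refine ⟨convex_Icc 0 x, fun u hu v hv p q hp hq hpq => ?_⟩
  refine le_concMaj_of_forall hf fun g hg hfg => le_trans ?_ (hg.2 hu hv hp hq hpq)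
  gcongr
  exacts [concMaj_le hg hfg hu, concMaj_le hg hfg hv]

lemma concMaj_eq_self (hf : ConcaveOn ℝ (Icc 0 x) f) (hbdd : BddAbove (f '' Icc 0 x))
    (hu : u ∈ Icc 0 x) : concMaj x f u = f u :=
  le_antisymm (concMaj_le hf (fun _ _ => le_rfl) hu) (le_concMaj hbdd hu)

lemma convMin_eq_chord (hf : ∀ t ∈ Icc 0 x, chord f 0 x t ≤ f t) (hu : u ∈ Icc 0 x) :
    convMin x f u = chord f 0 x u := by
  have h0 : (0 : ℝ) ∈ Icc 0 x := left_mem_Icc.2 (hu.1.trans hu.2)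
  have hx : x ∈ Icc 0 x := right_mem_Icc.2 (hu.1.trans hu.2)
  have hmem : chord f 0 x u ∈ {y : ℝ | ∃ g : ℝ → ℝ, ConvexOn ℝ (Icc 0 x) g ∧
      (∀ t ∈ Icc (0 : ℝ) x, g t ≤ f t) ∧ y = g u} :=
    ⟨chord f 0 x, convexOn_chord (convex_Icc 0 x), hf, rfl⟩
  refine IsGreatest.csSup_eq ⟨hmem, ?_⟩
  rintro _ ⟨g, hg, hgf, rfl⟩
  have hmax := (hg.sub (concaveOn_chord hg.1 (f := f) (a := 0) (b := x))).le_max_of_mem_Icc h0 hx hu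
  simp only [Pi.sub_apply, chord_left, chord_right] at hmax
  exact sub_nonpos.1 (hmax.trans (max_le (sub_nonpos.2 (hgf 0 h0)) (sub_nonpos.2 (hgf x hx))))

end Envelopes

section ContinuousMajorant

variable {x : ℝ} {f : ℝ → ℝ} {a b c t : ℝ}

/-- The hypothesis on `dist · c` singles out the endpoints of `[0, x]`: there `f` has the concave
majorants `f c + ε + C * dist · c`. -/
lemma exists_concMaj_le_add_mul_dist (hf : ContinuousOn f (Icc 0 x)) (hc : c ∈ Icc 0 x)
    (hdist : ConcaveOn ℝ (Icc 0 x) fun t => dist t c) {ε : ℝ} (hε : 0 < ε) :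
    ∃ C, ∀ t ∈ Icc 0 x, concMaj x f t ≤ f c + ε + C * dist t c := by
  obtain ⟨C, hC, hle⟩ := exists_le_add_mul_dist isCompact_Icc hf hc hε
  have hconc : ConcaveOn ℝ (Icc 0 x) fun t => f c + ε + C * dist t c := by
    exact (concaveOn_const (f c + ε) (convex_Icc 0 x)).add (hdist.smul hC)
  exact ⟨C, fun t ht => concMaj_le hconc hle ht⟩

lemma concMaj_eq_of_concaveOn_dist (hf : ContinuousOn f (Icc 0 x)) (hc : c ∈ Icc 0 x)
    (hdist : ConcaveOn ℝ (Icc 0 x) fun t => dist t c) : concMaj x f c = f c := by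
  refine le_antisymm (le_of_forall_pos_le_add fun ε hε => ?_)
    (le_concMaj (isCompact_Icc.bddAbove_image hf) hc)
  obtain ⟨C, hC⟩ := exists_concMaj_le_add_mul_dist hf hc hdist hε
  simpa using hC c hc

lemma continuousWithinAt_concMaj_of_concaveOn_dist (hf : ContinuousOn f (Icc 0 x))
    (hc : c ∈ Icc 0 x) (hdist : ConcaveOn ℝ (Icc 0 x) fun t => dist t c) :
    ContinuousWithinAt (concMaj x f) (Icc 0 x) c := by
  rw [ContinuousWithinAt, concMaj_eq_of_concaveOn_dist hf hc hdist]
  refine tendsto_order.2 ⟨fun l hl => ?_, fun r hr => ?_⟩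
  · filter_upwards [(hf c hc).eventually_const_lt hl, self_mem_nhdsWithin] with t hlt ht
    exact hlt.trans_le (le_concMaj (isCompact_Icc.bddAbove_image hf) ht)
  · obtain ⟨ε, hε, hεr⟩ : ∃ ε > 0, f c + ε < r := ⟨(r - f c) / 2, by linarith, by linarith⟩
    obtain ⟨C, hC⟩ := exists_concMaj_le_add_mul_dist hf hc hdist hε
    have hcont : Continuous fun t => f c + ε + C * dist t c := by fun_prop
    have hev : ∀ᶠ t in nhds c, f c + ε + C * dist t c < r :=
      hcont.continuousAt.eventually_lt_const (by simpa using hεr)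
    filter_upwards [nhdsWithin_le_nhds hev, self_mem_nhdsWithin] with t htr ht
    exact (hC t ht).trans_lt htr

lemma concMaj_zero (hx : 0 ≤ x) (hf : ContinuousOn f (Icc 0 x)) : concMaj x f 0 = f 0 :=
  concMaj_eq_of_concaveOn_dist hf (left_mem_Icc.2 hx) concaveOn_dist_left

lemma concMaj_right (hx : 0 ≤ x) (hf : ContinuousOn f (Icc 0 x)) : concMaj x f x = f x :=
  concMaj_eq_of_concaveOn_dist hf (right_mem_Icc.2 hx) concaveOn_dist_right

lemma continuousOn_concMaj (hf : ContinuousOn f (Icc 0 x)) :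
    ContinuousOn (concMaj x f) (Icc 0 x) := by
  intro t ht
  rcases eq_or_lt_of_le ht.1 with rfl | h0t
  · exact continuousWithinAt_concMaj_of_concaveOn_dist hf ht concaveOn_dist_left
  rcases eq_or_lt_of_le ht.2 with rfl | htx
  · exact continuousWithinAt_concMaj_of_concaveOn_dist hf ht concaveOn_dist_right
  have hint := (concaveOn_concMaj (isCompact_Icc.bddAbove_image hf)).continuousOn_interior
  rw [interior_Icc] at hint
  exact (hint.continuousAt (Ioo_mem_nhds h0t htx)).continuousWithinAt

theorem areaF_concMaj (hf : ContinuousOn f (Icc 0 x))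
    (hchord : ∀ t ∈ Icc 0 x, chord f 0 x t ≤ f t) : AreaF x (concMaj x f) = AreaF x f := by
  have hbdd := isCompact_Icc.bddAbove_image hf
  have hbdd' := isCompact_Icc.bddAbove_image (continuousOn_concMaj hf)
  refine setIntegral_congr_fun measurableSet_Icc fun u hu => ?_
  have hx : 0 ≤ x := hu.1.trans hu.2
  have hchord_eq : chord (concMaj x f) 0 x = chord f 0 x := by
    funext t
    simp only [chord, slope, concMaj_zero hx hf, concMaj_right hx hf]
  have hchord' : ∀ t ∈ Icc 0 x, chord (concMaj x f) 0 x t ≤ concMaj x f t := fun t ht =>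
    chord_le_of_concaveOn (concaveOn_concMaj hbdd) (left_mem_Icc.2 hx) (right_mem_Icc.2 hx) ht
  simp only [concMaj_eq_self (concaveOn_concMaj hbdd) hbdd' hu, convMin_eq_chord hchord hu,
    convMin_eq_chord hchord' hu, hchord_eq]

/-- `min f̄ (L + m)`, with `L` the chord of `f̄`, is a concave majorant of `f`: outside `[a, b]` the
chord already dominates `f̄`. -/
lemma concMaj_le_chord_add (hf : BddAbove (f '' Icc 0 x)) (ha : a ∈ Icc 0 x) (hb : b ∈ Icc 0 x)
    (hab : a < b) {m : ℝ} (hm : 0 ≤ m)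
    (hle : ∀ t ∈ Icc a b, f t ≤ chord (concMaj x f) a b t + m) (ht : t ∈ Icc 0 x) :
    concMaj x f t ≤ chord (concMaj x f) a b t + m := by
  have hconc := concaveOn_concMaj hf
  refine (concMaj_le (hconc.inf ((concaveOn_chord hconc.1).add_const m))
    (fun u hu => le_inf (le_concMaj hf hu) ?_) ht).trans inf_le_right
  by_cases huab : u ∈ Icc a b
  · exact hle u huab
  · calc f u ≤ concMaj x f u := le_concMaj hf hu
      _ ≤ chord (concMaj x f) a b u :=
          le_chord_of_concaveOn_of_notMem_Icc hconc ha hb hab hu huab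
      _ ≤ chord (concMaj x f) a b u + m := le_add_of_nonneg_right hm

/-- Otherwise the line parallel to the chord through the highest point of `f` above it would
bound `f̄`, making that point a contact point. -/
lemma le_chord_of_lt_concMaj (hf : ContinuousOn f (Icc 0 x)) (ha : a ∈ Icc 0 x)
    (hb : b ∈ Icc 0 x) (hab : a < b) (hfa : concMaj x f a = f a) (hfb : concMaj x f b = f b)
    (hlt : ∀ t ∈ Ioo a b, f t < concMaj x f t) (ht : t ∈ Icc a b) :
    f t ≤ chord (concMaj x f) a b t := by
  have hsub : Icc a b ⊆ Icc 0 x := Icc_subset_Icc ha.1 hb.2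
  obtain ⟨y, hy, hmax⟩ := isCompact_Icc.exists_isMaxOn ⟨t, ht⟩
    ((hf.mono hsub).sub (continuous_chord (f := concMaj x f) (a := a) (b := b)).continuousOn)
  set m := f y - chord (concMaj x f) a b y with hm
  have hle : ∀ u ∈ Icc a b, f u ≤ chord (concMaj x f) a b u + m := fun u hu =>
    sub_le_iff_le_add'.1 (hmax hu)
  suffices m ≤ 0 from (hle t ht).trans (add_le_of_nonpos_right this)
  by_contra! hpos
  have hcontact : concMaj x f y ≤ f y := by
    simpa [hm] using concMaj_le_chord_add (isCompact_Icc.bddAbove_image hf) ha hb hab hpos.le hle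
      (hsub hy)
  have hya : a ≠ y := by
    rintro rfl
    simp [hm, chord_left, hfa] at hpos
  have hyb : y ≠ b := by
    rintro rfl
    simp [hm, chord_right, hfb] at hpos
  exact (hlt y ⟨lt_of_le_of_ne hy.1 hya, lt_of_le_of_ne hy.2 hyb⟩).not_ge hcontact

lemma concMaj_eq_chord_of_lt (hf : ContinuousOn f (Icc 0 x)) (ha : a ∈ Icc 0 x)
    (hb : b ∈ Icc 0 x) (hab : a < b) (hfa : concMaj x f a = f a) (hfb : concMaj x f b = f b)
    (hlt : ∀ t ∈ Ioo a b, f t < concMaj x f t) (ht : t ∈ Icc a b) :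
    concMaj x f t = chord f a b t := by
  have hbdd := isCompact_Icc.bddAbove_image hf
  have hchord : chord (concMaj x f) a b t = chord f a b t := by
    simp only [chord, slope, hfa, hfb]
  rw [← hchord]
  refine le_antisymm ?_ (chord_le_of_concaveOn (concaveOn_concMaj hbdd) ha hb ht)
  simpa using concMaj_le_chord_add hbdd ha hb hab le_rfl
    (by simpa using fun u hu hub => le_chord_of_lt_concMaj hf ha hb hab hfa hfb hlt ⟨hu, hub⟩)
    (Icc_subset_Icc ha.1 hb.2 ht)

/-- The set where `f` lies strictly below its least concave majorant. The endpoints, which are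
contact points of a continuous `f`, are left out by definition so that openness is a statement
about `ℝ`. -/
def gapSet (x : ℝ) (f : ℝ → ℝ) : Set ℝ := {t ∈ Ioo 0 x | f t < concMaj x f t}

lemma gapSet_subset_Ioo : gapSet x f ⊆ Ioo 0 x := fun _ ht => ht.1

lemma isOpen_gapSet (hf : ContinuousOn f (Icc 0 x)) : IsOpen (gapSet x f) := by
  have h := (((continuousOn_concMaj hf).sub hf).mono Ioo_subset_Icc_self).isOpen_inter_preimage
    isOpen_Ioo (isOpen_Ioi (a := (0 : ℝ)))
  convert h using 1
  ext t
  simp [gapSet]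

lemma concMaj_eq_of_notMem_gapSet (hf : ContinuousOn f (Icc 0 x)) (ht : t ∈ Icc 0 x)
    (htU : t ∉ gapSet x f) : concMaj x f t = f t := by
  have hx : 0 ≤ x := ht.1.trans ht.2
  rcases eq_or_lt_of_le ht.1 with rfl | h0t
  · exact concMaj_zero hx hf
  rcases eq_or_lt_of_le ht.2 with rfl | htx
  · exact concMaj_right hx hf
  exact le_antisymm (not_lt.1 fun h => htU ⟨⟨h0t, htx⟩, h⟩)
    (le_concMaj (isCompact_Icc.bddAbove_image hf) ht)

lemma exists_component_gapSet_eq_Ioo (hf : ContinuousOn f (Icc 0 x)) (ht : t ∈ gapSet x f) :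
    ∃ a ∈ Icc 0 x, ∃ b ∈ Icc 0 x, a < b ∧ connectedComponentIn (gapSet x f) t = Ioo a b ∧
      EqOn (deriv (concMaj x f)) (fun _ => slope f a b) (Ioo a b) := by
  obtain ⟨a, ⟨ha, haU⟩, b, ⟨hb, hbU⟩, hab, hC⟩ :=
    exists_connectedComponentIn_eq_Ioo (isOpen_gapSet hf) gapSet_subset_Ioo ht
  have hlt : ∀ u ∈ Ioo a b, f u < concMaj x f u := fun u hu =>
    (connectedComponentIn_subset (gapSet x f) t (hC ▸ hu)).2
  refine ⟨a, ha, b, hb, hab, hC, fun u hu => (hasDerivAt_chord.congr_of_eventuallyEq ?_).deriv⟩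
  filter_upwards [Ioo_mem_nhds hu.1 hu.2] with v hv
  exact concMaj_eq_chord_of_lt hf ha hb hab (concMaj_eq_of_notMem_gapSet hf ha haU)
    (concMaj_eq_of_notMem_gapSet hf hb hbU) hlt (Ioo_subset_Icc_self hv)

end ContinuousMajorant

section Energy

variable {x : ℝ} {f : ℝ → ℝ} {a b : ℝ}

lemma MemA.continuousOn (hf : MemA x f) : ContinuousOn f (Icc 0 x) := by
  obtain ⟨-, hint, hprim, -⟩ := hf
  refine (intervalIntegral.continuousOn_primitive_Icc hint).congr fun t ht => ?_
  simp only [hprim t ht, intervalIntegral.integral_of_le ht.1, integral_Icc_eq_integral_Ioc]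

lemma MemA.ae_differentiableAt (hf : MemA x f) :
    ∀ᵐ t, t ∈ Ioo 0 x → DifferentiableAt ℝ f t := by
  obtain ⟨-, hint, hprim, -⟩ := hf
  rcases lt_or_ge x 0 with hx | hx
  · simp [Ioo_eq_empty_of_le hx.le]
  have hFTC := ((intervalIntegrable_iff_integrableOn_Icc_of_le hx).2 hint).ae_hasDerivAt_integral
  rw [uIcc_of_le hx] at hFTC
  filter_upwards [hFTC] with t hderiv ht
  have heq : f =ᶠ[nhds t] fun u => ∫ v in (0 : ℝ)..u, deriv f v := by
    filter_upwards [Icc_mem_nhds ht.1 ht.2] using hprim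
  exact ((hderiv (Ioo_subset_Icc_self ht) 0 (left_mem_Icc.2 hx)).congr_of_eventuallyEq
    heq).differentiableAt

lemma MemA.integral_deriv_eq_sub (hf : MemA x f) (ha : a ∈ Icc 0 x) (hb : b ∈ Icc 0 x) :
    ∫ t in a..b, deriv f t = f b - f a := by
  obtain ⟨-, hint, hprim, -⟩ := hf
  have h0 : (0 : ℝ) ∈ Icc 0 x := left_mem_Icc.2 (ha.1.trans ha.2)
  rw [hprim b hb, hprim a ha]
  exact (intervalIntegral.integral_interval_sub_left
    (hint.mono_set (uIcc_subset_Icc h0 hb)).intervalIntegrable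
    (hint.mono_set (uIcc_subset_Icc h0 ha)).intervalIntegrable).symm

lemma MemA.slope_sq_mul_sub_le (hf : MemA x f) (ha : a ∈ Icc 0 x) (hb : b ∈ Icc 0 x)
    (hab : a < b) : slope f a b ^ 2 * (b - a) ≤ ∫ t in a..b, deriv f t ^ 2 := by
  have hsub : uIoc a b ⊆ Icc 0 x := uIoc_subset_uIcc.trans (uIcc_subset_Icc ha hb)
  have hslope : slope f a b = ⨍ t in a..b, deriv f t := by
    rw [interval_average_eq, hf.integral_deriv_eq_sub ha hb, slope, vsub_eq_sub]
  have hjensen : (⨍ t in a..b, deriv f t) ^ 2 ≤ ⨍ t in a..b, deriv f t ^ 2 :=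
    even_two.convexOn_pow.map_set_average_le (continuous_pow 2).continuousOn isClosed_univ
      (by simp [uIoc_of_le hab.le, hab]) (by simp [uIoc_of_le hab.le])
      (ae_of_all _ fun _ => mem_univ _) (hf.2.1.mono_set hsub) (hf.2.2.2.mono_set hsub)
  rwa [← hslope, interval_average_eq_div, le_div_iff₀ (sub_pos.2 hab)] at hjensen

lemma MemA.setLIntegral_slope_sq_le (hf : MemA x f) (ha : a ∈ Icc 0 x) (hb : b ∈ Icc 0 x)
    (hab : a < b) :
    ∫⁻ _ in Ioo a b, ENNReal.ofReal (slope f a b ^ 2) ≤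
      ∫⁻ t in Ioo a b, ENNReal.ofReal (deriv f t ^ 2) := by
  have hsq : IntegrableOn (fun t => deriv f t ^ 2) (Ioo a b) :=
    hf.2.2.2.mono_set (Ioo_subset_Icc_self.trans (Icc_subset_Icc ha.1 hb.2))
  rw [setLIntegral_const, Real.volume_Ioo, ← ENNReal.ofReal_mul (sq_nonneg _),
    ← ofReal_integral_eq_lintegral_ofReal hsq (ae_of_all _ fun _ => sq_nonneg _),
    ← integral_Ioc_eq_integral_Ioo, ← intervalIntegral.integral_of_le hab.le]
  exact ENNReal.ofReal_le_ofReal (hf.slope_sq_mul_sub_le ha hb hab)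

lemma MemA.ae_deriv_concMaj_eq (hf : MemA x f) :
    ∀ᵐ t, t ∈ Ioo 0 x \ gapSet x f → deriv (concMaj x f) t = deriv f t := by
  have hbdd := isCompact_Icc.bddAbove_image hf.continuousOn
  have hdiff := ae_differentiableAt_of_concaveOn (concaveOn_concMaj hbdd)
  rw [interior_Icc] at hdiff
  filter_upwards [hf.ae_differentiableAt, hdiff] with t hft hFt ⟨ht, htU⟩
  refine deriv_eq_of_eventuallyLE_of_eq ?_
    (concMaj_eq_of_notMem_gapSet hf.continuousOn (Ioo_subset_Icc_self ht) htU).symm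
    (hft ht) (hFt ht)
  filter_upwards [Icc_mem_nhds ht.1 ht.2] with u hu using le_concMaj hbdd hu

lemma MemA.lintegral_sq_deriv_concMaj_le (hf : MemA x f) :
    ∫⁻ t in Icc 0 x, ENNReal.ofReal (deriv (concMaj x f) t ^ 2) ≤
      ∫⁻ t in Icc 0 x, ENNReal.ofReal (deriv f t ^ 2) := by
  have hU := isOpen_gapSet hf.continuousOn
  have hgap : ∫⁻ t in gapSet x f, ENNReal.ofReal (deriv (concMaj x f) t ^ 2) ≤
      ∫⁻ t in gapSet x f, ENNReal.ofReal (deriv f t ^ 2) := by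
    refine setLIntegral_le_of_connectedComponentIn hU fun t ht => ?_
    obtain ⟨a, ha, b, hb, hab, hC, hderiv⟩ := exists_component_gapSet_eq_Ioo hf.continuousOn ht
    rw [hC, setLIntegral_congr_fun measurableSet_Ioo
      fun u hu => congrArg (fun d => ENNReal.ofReal (d ^ 2)) (hderiv hu)]
    exact hf.setLIntegral_slope_sq_le ha hb hab
  have hcontact : ∫⁻ t in Ioo 0 x \ gapSet x f, ENNReal.ofReal (deriv (concMaj x f) t ^ 2) =
      ∫⁻ t in Ioo 0 x \ gapSet x f, ENNReal.ofReal (deriv f t ^ 2) := by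
    refine setLIntegral_congr_fun_ae (measurableSet_Ioo.diff hU.measurableSet) ?_
    filter_upwards [hf.ae_deriv_concMaj_eq] with t ht htU
    rw [ht htU]
  have hsplit (p : ℝ → ℝ≥0∞) :
      ∫⁻ t in Icc 0 x, p t =
        (∫⁻ t in gapSet x f, p t) + ∫⁻ t in Ioo 0 x \ gapSet x f, p t := by
    rw [setLIntegral_congr Ioo_ae_eq_Icc.symm,
      ← lintegral_inter_add_sdiff p (Ioo 0 x) hU.measurableSet,
      inter_eq_right.2 gapSet_subset_Ioo]
  rw [hsplit, hsplit, hcontact]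
  exact add_le_add hgap le_rfl

lemma MemA.lintegral_sq_deriv_lt_top (hf : MemA x f) :
    ∫⁻ t in Icc 0 x, ENNReal.ofReal (deriv f t ^ 2) < ∞ :=
  (hasFiniteIntegral_iff_ofReal (ae_of_all _ fun _ => sq_nonneg _)).1 hf.2.2.2.2

theorem memA_concMaj (hx : 0 ≤ x) (hf : MemA x f) : MemA x (concMaj x f) := by
  have hfc := hf.continuousOn
  have hzero : concMaj x f 0 = 0 := (concMaj_zero hx hfc).trans hf.1
  have hmeas : AEStronglyMeasurable (deriv (concMaj x f)) (volume.restrict (Icc 0 x)) :=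
    (measurable_deriv _).aestronglyMeasurable
  have hsq : IntegrableOn (fun t => deriv (concMaj x f) t ^ 2) (Icc 0 x) :=
    ⟨hmeas.pow 2, (hasFiniteIntegral_iff_ofReal (ae_of_all _ fun _ => sq_nonneg _)).2
      (hf.lintegral_sq_deriv_concMaj_le.trans_lt hf.lintegral_sq_deriv_lt_top)⟩
  have hint : IntegrableOn (deriv (concMaj x f)) (Icc 0 x) :=
    ((memLp_two_iff_integrable_sq hmeas).2 hsq).integrable one_le_two
  refine ⟨hzero, hint, fun t ht => ?_, hsq⟩
  have hsub : Icc 0 t ⊆ Icc 0 x := Icc_subset_Icc_right ht.2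
  rw [integral_deriv_eq_sub_of_concaveOn ht.1
    ((concaveOn_concMaj (isCompact_Icc.bddAbove_image hfc)).subset hsub (convex_Icc 0 t))
    ((continuousOn_concMaj hfc).mono hsub)
    ((intervalIntegrable_iff_integrableOn_Icc_of_le ht.1).2 (hint.mono_set hsub)), hzero, sub_zero]

theorem MemA.gammaF_concMaj_le (hf : MemA x f) : GammaF x (concMaj x f) ≤ GammaF x f := by
  rw [GammaF, GammaF,
    integral_eq_lintegral_of_nonneg_ae (ae_of_all _ fun _ => sq_nonneg _)
      ((measurable_deriv _).pow_const 2).aestronglyMeasurable,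
    integral_eq_lintegral_of_nonneg_ae (ae_of_all _ fun _ => sq_nonneg _)
      ((measurable_deriv _).pow_const 2).aestronglyMeasurable]
  exact ENNReal.toReal_mono hf.lintegral_sq_deriv_lt_top.ne hf.lintegral_sq_deriv_concMaj_le

end Energy

theorem concave_majorant_of_bridge_general {x : ℝ} {f : ℝ → ℝ} (hx : 0 ≤ x) (hf : MemA x f) :
    MemA x (concMaj x f) ∧ concMaj x f x = f x ∧
    (∀ u ∈ Icc 0 x, f u ≤ concMaj x f u) ∧
    ((∀ u ∈ Icc 0 x, chord f 0 x u ≤ f u) → AreaF x (concMaj x f) = AreaF x f) ∧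
    GammaF x (concMaj x f) ≤ GammaF x f :=
  ⟨memA_concMaj hx hf, concMaj_right hx hf.continuousOn,
    fun _ => le_concMaj (isCompact_Icc.bddAbove_image hf.continuousOn),
    areaF_concMaj hf.continuousOn, hf.gammaF_concMaj_le⟩

/-- Lemma 5.9 of the paper. For a nonnegative bridge `f ∈ 𝓑₊`, the least
concave majorant `f̄` is again a nonnegative bridge, with `A_{0,1}(f̄) = A_{0,1}(f)` and
`Γ_{0,1}(f̄) ≤ Γ_{0,1}(f)`. -/
theorem concave_majorant_of_bridge (f : ℝ → ℝ) (hf : MemA 1 f) (hbridge : f 1 = 0)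
    (hnonneg : ∀ u ∈ Set.Icc (0:ℝ) 1, 0 ≤ f u) :
    MemA 1 (concMaj 1 f) ∧ concMaj 1 f 1 = 0 ∧
    (∀ u ∈ Set.Icc (0:ℝ) 1, 0 ≤ concMaj 1 f u) ∧
    AreaF 1 (concMaj 1 f) = AreaF 1 f ∧
    GammaF 1 (concMaj 1 f) ≤ GammaF 1 f := by
  obtain ⟨hmem, hend, hle, harea, hgamma⟩ := concave_majorant_of_bridge_general zero_le_one hf
  exact ⟨hmem, hend.trans hbridge, fun u hu => (hnonneg u hu).trans (hle u hu),
    harea (by simpa [chord, slope, hf.1, hbridge] using hnonneg), hgamma⟩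

end DidoLIL
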